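/- Let 𝒜, ℬ, 𝒦 be simplicial complexes over S such that 𝒜 ∩ 𝒦 and ℬ ∩ 𝒦 are nonempty. Then 𝒜 ∩ 𝒦 and ℬ ∩ 𝒦 are simplicial complexes and d(𝒜 ∩ 𝒦, ℬ ∩ 𝒦) ≤ d(𝒜, ℬ). -/

import Mathlib

/-!
For `α` in `|K|` the distances to `|B|` and to `|B ∩ K|` agree, and the theorem follows by taking
suprema. To see this, let `β` be any point of `|B|`. The restriction of `α` to the support of `β`
has total mass at most one, and rescaling it to mass one (or, if it vanishes, replacing it by any
point of `|B ∩ K|`) gives a point `γ` of `|B ∩ K|` with `α ≤ γ` on the support of `β`. Between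
functions of equal total mass the halved `ℓ¹` distance is the mass of `(α - β)⁺`, so only the
places where `α` exceeds its target count: for `γ` these lie off the support of `β`, where
`β = 0 ≤ γ`. Hence `γ` is at least as close to `α` as `β` is.
-/

open scoped BigOperators

/-- A simplicial complex over the vertex set `S`: a nonempty collection of
nonempty finite subsets of `S`, closed under taking nonempty subsets. -/
def IsSimplicialComplex {S : Type*} (K : Set (Finset S)) : Prop :=
  K.Nonempty ∧ (∀ F ∈ K, F.Nonempty) ∧
    ∀ F ∈ K, ∀ G : Finset S, G.Nonempty → G ⊆ F → G ∈ K

/-- Halved ℓ¹ distance between finitely supported real functions: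
`d(α,β) = (1/2) ∑ₛ |α s - β s|`. -/
noncomputable def l1dist {S : Type*} (α β : S →₀ ℝ) : ℝ :=
  (1 / 2) * (α - β).sum fun _ x => |x|

/-- The ℓ¹ geometric realization of a collection `K` of finite subsets of `S`:
finitely supported probability vectors whose support is a face of `K`. -/
def realization {S : Type*} (K : Set (Finset S)) : Set (S →₀ ℝ) :=
  {α | (∀ s, 0 ≤ α s) ∧ (α.sum fun _ x => x) = 1 ∧ α.support ∈ K}

/-- Distance from a point to a set of finitely supported functions. -/
noncomputable def distToSet {S : Type*} (α : S →₀ ℝ) (X : Set (S →₀ ℝ)) : ℝ :=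
  sInf (l1dist α '' X)

/-- One-sided Hausdorff distance between (the realizations of) two complexes. -/
noncomputable def hdelta {S : Type*} (K₁ K₂ : Set (Finset S)) : ℝ :=
  sSup ((fun α => distToSet α (realization K₂)) '' realization K₁)

/-- Hausdorff distance between (the realizations of) two simplicial complexes. -/
noncomputable def hdist {S : Type*} (K₁ K₂ : Set (Finset S)) : ℝ :=
  max (hdelta K₁ K₂) (hdelta K₂ K₁)

/-- `d(F, K)`: supremum of distances to `|K|₁` over probability vectors
supported exactly on `F`. -/
noncomputable def dFace {S : Type*} (F : Finset S) (K : Set (Finset S)) : ℝ :=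
  sSup ((fun α => distToSet α (realization K)) ''
    {α : S →₀ ℝ | (∀ s, 0 ≤ α s) ∧ (α.sum fun _ x => x) = 1 ∧ α.support = F})

/-- The `n`-skeleton of a simplicial complex. -/
def skeleton {S : Type*} (n : ℕ) (K : Set (Finset S)) : Set (Finset S) :=
  {F | F ∈ K ∧ F.card ≤ n + 1}

section FinitelySupported

variable {S M : Type*}

theorem monotone_degree [AddCommMonoid M] [PartialOrder M] [IsOrderedAddMonoid M] :
    Monotone (Finsupp.degree : (S →₀ M) → M) := by
  classical
  exact fun α β hαβ => Finsupp.sum_le_sum_index hαβ (fun _ _ => monotone_id) fun _ _ => rfl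

theorem degree_pos [AddCommMonoid M] [PartialOrder M] [IsOrderedCancelAddMonoid M] {α : S →₀ M}
    (hα : 0 ≤ α) (hα_ne : α ≠ 0) : 0 < α.degree :=
  Finsupp.sum_pos (g := fun _ x => x)
    (fun s hs => (hα s).lt_of_ne' (Finsupp.mem_support_iff.mp hs)) hα_ne

theorem degree_smul {R : Type*} [AddCommMonoid M] [DistribSMul R M] (c : R) (α : S →₀ M) :
    (c • α).degree = c • α.degree :=
  (Finsupp.sum_smul_index' (h := fun _ x => x) fun _ => rfl).trans Finset.smul_sum.symm

theorem degree_abs [AddCommGroup M] [Lattice M] [IsOrderedAddMonoid M] (α : S →₀ M) :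
    |α|.degree = α.sum fun _ x => |x| := by
  have h_support : |α|.support ⊆ α.support := fun s hs => by
    rw [Finsupp.mem_support_iff] at hs ⊢
    exact fun hαs => hs (show |α s| = 0 by rw [hαs, abs_zero])
  exact Finset.sum_subset h_support fun s _ hs => Finsupp.notMem_support_iff.mp hs

theorem filter_nonneg [Zero M] [Preorder M] {α : S →₀ M} (hα : 0 ≤ α) (p : S → Prop)
    [DecidablePred p] : 0 ≤ α.filter p := fun s => by
  rw [Finsupp.filter_apply]
  split_ifs
  exacts [hα s, le_rfl]

theorem filter_le_self [Zero M] [Preorder M] {α : S →₀ M} (hα : 0 ≤ α) (p : S → Prop)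
    [DecidablePred p] : α.filter p ≤ α := fun s => by
  rw [Finsupp.filter_apply]
  split_ifs
  exacts [le_rfl, hα s]

theorem posPart_sub_le_posPart_sub_of_le_on_support [AddCommGroup M] [Lattice M]
    [IsOrderedAddMonoid M] {α β γ : S →₀ M} (hγ : 0 ≤ γ) (hαγ : ∀ s ∈ β.support, α s ≤ γ s) :
    (α - γ)⁺ ≤ (α - β)⁺ := by
  refine sup_le (fun s => ?_) le_sup_right
  rw [posPart_def, Finsupp.sup_apply, Finsupp.sub_apply, Finsupp.sub_apply]
  by_cases hs : s ∈ β.support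
  · exact (sub_nonpos.mpr (hαγ s hs)).trans le_sup_right
  · rw [Finsupp.notMem_support_iff.mp hs]
    exact (sub_le_sub_left (hγ s) (α s)).trans le_sup_left

end FinitelySupported

section L1Dist

variable {S : Type*} {α β γ : S →₀ ℝ}

theorem l1dist_nonneg (α β : S →₀ ℝ) : 0 ≤ l1dist α β :=
  mul_nonneg one_half_pos.le (Finsupp.sum_nonneg' fun _ => abs_nonneg _)

theorem l1dist_eq_degree_posPart (h : α.degree = β.degree) :
    l1dist α β = (α - β)⁺.degree := by
  have h_zero : (α - β).degree = 0 := by rw [map_sub, h, sub_self]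
  have h_two : |α - β|.degree = 2 * (α - β)⁺.degree := by
    rw [← add_zero |α - β|.degree, ← h_zero, ← map_add, abs_add_eq_two_nsmul_posPart, map_nsmul,
      nsmul_eq_mul, Nat.cast_ofNat]
  rw [l1dist, ← degree_abs, h_two, one_div, inv_mul_cancel_left₀ two_ne_zero]

theorem l1dist_le_degree (hα : 0 ≤ α) (hβ : 0 ≤ β) (h : α.degree = β.degree) :
    l1dist α β ≤ α.degree := by
  rw [l1dist_eq_degree_posPart h]
  exact monotone_degree (sup_le (sub_le_self α hβ) hα)

theorem l1dist_le_l1dist_of_le_on_support (hγ : 0 ≤ γ) (hαβ : α.degree = β.degree)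
    (hαγ : α.degree = γ.degree) (hle : ∀ s ∈ β.support, α s ≤ γ s) :
    l1dist α γ ≤ l1dist α β := by
  rw [l1dist_eq_degree_posPart hαγ, l1dist_eq_degree_posPart hαβ]
  exact monotone_degree (posPart_sub_le_posPart_sub_of_le_on_support hγ hle)

theorem bddBelow_l1dist_image (α : S →₀ ℝ) (X : Set (S →₀ ℝ)) : BddBelow (l1dist α '' X) :=
  ⟨0, Set.forall_mem_image.mpr fun β _ => l1dist_nonneg α β⟩

theorem distToSet_le_l1dist (α : S →₀ ℝ) {X : Set (S →₀ ℝ)} (hβ : β ∈ X) :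
    distToSet α X ≤ l1dist α β :=
  csInf_le (bddBelow_l1dist_image α X) (Set.mem_image_of_mem _ hβ)

theorem distToSet_anti (α : S →₀ ℝ) {X Y : Set (S →₀ ℝ)} (hX : X.Nonempty) (hXY : X ⊆ Y) :
    distToSet α Y ≤ distToSet α X :=
  csInf_le_csInf (bddBelow_l1dist_image α Y) (hX.image _) (Set.image_mono hXY)

end L1Dist

section Realization

variable {S : Type*} {A B K : Set (Finset S)} {α β δ : S →₀ ℝ}

theorem IsSimplicialComplex.inter (hA : IsSimplicialComplex A) (hK : IsSimplicialComplex K)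
    (hAK : (A ∩ K).Nonempty) : IsSimplicialComplex (A ∩ K) :=
  ⟨hAK, fun F hF => hA.2.1 F hF.1, fun F hF G hG hGF =>
    ⟨hA.2.2 F hF.1 G hG hGF, hK.2.2 F hF.2 G hG hGF⟩⟩

theorem mem_realization_iff :
    α ∈ realization K ↔ 0 ≤ α ∧ α.degree = 1 ∧ α.support ∈ K :=
  Iff.rfl

theorem realization_mono (hAB : A ⊆ B) : realization A ⊆ realization B :=
  fun _ hα => ⟨hα.1, hα.2.1, hAB hα.2.2⟩

theorem IsSimplicialComplex.realization_nonempty (hK : IsSimplicialComplex K) :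
    (realization K).Nonempty := by
  obtain ⟨⟨F, hF⟩, hne, hdown⟩ := hK
  obtain ⟨s, hs⟩ := hne F hF
  refine ⟨Finsupp.single s 1, mem_realization_iff.mpr ⟨?_, Finsupp.degree_single s 1, ?_⟩⟩
  · exact Finsupp.single_nonneg.mpr zero_le_one
  · rw [Finsupp.support_single s one_ne_zero]
    exact hdown F hF _ (Finset.singleton_nonempty s) (Finset.singleton_subset_iff.mpr hs)

theorem l1dist_le_one_of_mem_realization (hα : α ∈ realization A) (hβ : β ∈ realization B) :
    l1dist α β ≤ 1 := by
  rw [mem_realization_iff] at hα hβ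
  exact (l1dist_le_degree hα.1 hβ.1 (hα.2.1.trans hβ.2.1.symm)).trans_eq hα.2.1

theorem inv_degree_smul_mem_realization (hδ : 0 ≤ δ) (hδ_ne : δ ≠ 0) (hδK : δ.support ∈ K) :
    δ.degree⁻¹ • δ ∈ realization K := by
  have hpos : 0 < δ.degree := degree_pos hδ hδ_ne
  refine mem_realization_iff.mpr ⟨smul_nonneg (inv_nonneg.mpr hpos.le) hδ, ?_, ?_⟩
  · rw [degree_smul, smul_eq_mul, inv_mul_cancel₀ hpos.ne']
  · rwa [Finsupp.support_smul_eq (inv_ne_zero hpos.ne')]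

theorem exists_mem_realization_ge (hK : (realization K).Nonempty) (hδ : 0 ≤ δ)
    (hδ_le : δ.degree ≤ 1) (hδK : δ ≠ 0 → δ.support ∈ K) : ∃ γ ∈ realization K, δ ≤ γ := by
  by_cases hδ_ne : δ = 0
  · obtain ⟨γ, hγ⟩ := hK
    exact ⟨γ, hγ, hδ_ne.trans_le hγ.1⟩
  · have h_one_le : 1 ≤ δ.degree⁻¹ := (one_le_inv₀ (degree_pos hδ hδ_ne)).mpr hδ_le
    exact ⟨δ.degree⁻¹ • δ, inv_degree_smul_mem_realization hδ hδ_ne (hδK hδ_ne),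
      le_smul_of_one_le_left hδ h_one_le⟩

theorem exists_mem_realization_inter_ge_on_support (hB : IsSimplicialComplex B)
    (hK : IsSimplicialComplex K) (hBK : (B ∩ K).Nonempty) (hα : α ∈ realization K)
    (hβ : β ∈ realization B) : ∃ γ ∈ realization (B ∩ K), ∀ s ∈ β.support, α s ≤ γ s := by
  classical
  rw [mem_realization_iff] at hα hβ
  obtain ⟨hα_nonneg, hα_degree, hαK⟩ := hα
  have h_degree : (α.filter (· ∈ β.support)).degree ≤ 1 :=
    (monotone_degree (filter_le_self hα_nonneg _)).trans_eq hα_degree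
  have h_support (h : α.filter (· ∈ β.support) ≠ 0) :
      (α.filter (· ∈ β.support)).support ∈ B ∩ K := by
    rw [← Finsupp.support_nonempty_iff] at h
    rw [Finsupp.support_filter] at h ⊢
    exact ⟨hB.2.2 _ hβ.2.2 _ h fun s hs => (Finset.mem_filter.mp hs).2,
      hK.2.2 _ hαK _ h (Finset.filter_subset _ _)⟩
  obtain ⟨γ, hγ, hle⟩ := exists_mem_realization_ge (hB.inter hK hBK).realization_nonempty
    (filter_nonneg hα_nonneg _) h_degree h_support
  exact ⟨γ, hγ, fun s hs => (Finsupp.filter_apply_pos _ α hs).ge.trans (hle s)⟩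

theorem distToSet_realization_inter (hB : IsSimplicialComplex B) (hK : IsSimplicialComplex K)
    (hBK : (B ∩ K).Nonempty) (hα : α ∈ realization K) :
    distToSet α (realization (B ∩ K)) = distToSet α (realization B) := by
  refine le_antisymm (le_csInf (hB.realization_nonempty.image _) ?_)
    (distToSet_anti α (hB.inter hK hBK).realization_nonempty
      (realization_mono Set.inter_subset_left))
  refine Set.forall_mem_image.mpr fun β hβ => ?_
  obtain ⟨γ, hγ, hle⟩ := exists_mem_realization_inter_ge_on_support hB hK hBK hα hβ
  calc distToSet α (realization (B ∩ K)) ≤ l1dist α γ := distToSet_le_l1dist α hγ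
    _ ≤ l1dist α β := l1dist_le_l1dist_of_le_on_support hγ.1 (hα.2.1.trans hβ.2.1.symm)
        (hα.2.1.trans hγ.2.1.symm) hle

theorem bddAbove_distToSet_image_realization (A : Set (Finset S))
    (hB : (realization B).Nonempty) :
    BddAbove ((fun α => distToSet α (realization B)) '' realization A) := by
  obtain ⟨β, hβ⟩ := hB
  exact ⟨1, Set.forall_mem_image.mpr fun α hα =>
    (distToSet_le_l1dist α hβ).trans (l1dist_le_one_of_mem_realization hα hβ)⟩

theorem hdelta_inter_le (hA : IsSimplicialComplex A) (hB : IsSimplicialComplex B)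
    (hK : IsSimplicialComplex K) (hAK : (A ∩ K).Nonempty) (hBK : (B ∩ K).Nonempty) :
    hdelta (A ∩ K) (B ∩ K) ≤ hdelta A B := by
  have h_image : (fun α => distToSet α (realization (B ∩ K))) '' realization (A ∩ K) =
      (fun α => distToSet α (realization B)) '' realization (A ∩ K) :=
    Set.image_congr fun α hα =>
      distToSet_realization_inter hB hK hBK (realization_mono Set.inter_subset_right hα)
  rw [hdelta, h_image]
  exact csSup_le_csSup (bddAbove_distToSet_image_realization A hB.realization_nonempty)
    ((hA.inter hK hAK).realization_nonempty.image _)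
    (Set.image_mono (realization_mono Set.inter_subset_left))

end Realization

/-- Intersecting with a fixed simplicial complex is 1-Lipschitz for the
Hausdorff distance: `d(𝒜 ∩ 𝒦, ℬ ∩ 𝒦) ≤ d(𝒜, ℬ)`, and the intersections are
again simplicial complexes (provided they are nonempty). -/
theorem stmt3 {S : Type*} (A B K : Set (Finset S))
    (hA : IsSimplicialComplex A) (hB : IsSimplicialComplex B)
    (hK : IsSimplicialComplex K)
    (hAK : (A ∩ K).Nonempty) (hBK : (B ∩ K).Nonempty) :
    IsSimplicialComplex (A ∩ K) ∧ IsSimplicialComplex (B ∩ K) ∧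
      hdist (A ∩ K) (B ∩ K) ≤ hdist A B :=
  ⟨hA.inter hK hAK, hB.inter hK hBK,
    max_le_max (hdelta_inter_le hA hB hK hAK hBK) (hdelta_inter_le hB hA hK hBK hAK)⟩
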